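/- Assume J ≥ J_0. There exists ℓ_0 ∈ ℕ such that dim_H( ∩_{ℓ≥ℓ_0} T̃_∞((1+b)^ℓ J, b, ε) ∩ I ) ≥ H − ε, where dim_H denotes Hausdorff dimension. -/

import Mathlib

open scoped Classical ENNReal
open Set Filter MeasureTheory ProbabilityTheory

noncomputable section

/-- The dyadic interval `λ_{j,k} = [k 2^{-j}, (k+1) 2^{-j}]`. -/
def dyadic (j k : ℕ) : Set ℝ := Set.Icc ((k : ℝ) / 2 ^ j) (((k : ℝ) + 1) / 2 ^ j)

/-- Indices `k` of dyadic intervals of scale `j` that intersect `I`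
(the collection `I_j`). -/
def dyadicHit (I : Set ℝ) (j : ℕ) : Finset ℕ :=
  (Finset.range (2 ^ j)).filter fun k => (dyadic j k ∩ I).Nonempty

/-- Smallest number of intervals of length `ε` needed to cover `I`. -/
def coverNum (I : Set ℝ) (ε : ℝ) : ℕ :=
  sInf {n : ℕ | ∃ f : Fin n → ℝ, I ⊆ ⋃ i, Set.Icc (f i) (f i + ε)}

/-- Upper box-counting dimension of `I`:
`limsup_{ε → 0⁺} log N(ε) / (- log ε)`. -/
def upperBoxDim (I : Set ℝ) : ℝ :=
  Filter.limsup (fun ε : ℝ => Real.log (coverNum I ε) / (-Real.log ε))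
    (nhdsWithin 0 (Set.Ioi 0))

/-- The scale `⌊(1+β) j⌋` of the children of a dyadic interval of scale `j`. -/
def childScale (β : ℝ) (j : ℕ) : ℕ := ⌊(1 + β) * (j : ℝ)⌋₊

/-- Indices `k'` of dyadic intervals of scale `j'` belonging to `I_{j'}` and contained in
the dyadic interval of index `k` at scale `j`. -/
def childrenIn (I : Set ℝ) (j j' k : ℕ) : Finset ℕ :=
  (dyadicHit I j').filter fun k' => dyadic j' k' ⊆ dyadic j k

/-- The collection `SD(j,β,ε)` of intervals of `I_j` with slow duplication rate. -/
def SD (I : Set ℝ) (H β ε : ℝ) (j : ℕ) : Finset ℕ :=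
  (dyadicHit I j).filter fun k =>
    ((childrenIn I j (childScale β j) k).card : ℝ) ≤
      (2 : ℝ) ^ ((j : ℝ) * (β * H - 4 * (max 1 β) * ε))

/-- The collection `ND(j,β,ε)` of intervals of `I_j` with normal duplication rate. -/
def ND (I : Set ℝ) (H β ε : ℝ) (j : ℕ) : Finset ℕ :=
  (dyadicHit I j).filter fun k =>
    (2 : ℝ) ^ ((j : ℝ) * (β * H - 4 * (max 1 β) * ε)) ≤
        ((childrenIn I j (childScale β j) k).card : ℝ) ∧
    ((childrenIn I j (childScale β j) k).card : ℝ) ≤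
        (2 : ℝ) ^ ((j : ℝ) * (β * H + 4 * (max 1 β) * ε))

/-- The collection `FD(j,β,ε)` of intervals of `I_j` with fast duplication rate. -/
def FD (I : Set ℝ) (H β ε : ℝ) (j : ℕ) : Finset ℕ :=
  (dyadicHit I j).filter fun k =>
    (2 : ℝ) ^ ((j : ℝ) * (β * H + 4 * (max 1 β) * ε)) ≤
      ((childrenIn I j (childScale β j) k).card : ℝ)

/-- `C_β U`: the collection of all children (at scale `⌊(1+β)J⌋`, in `I_{⌊(1+β)J⌋}`)
of the intervals of a collection `U` at scale `J`. -/
def CB (I : Set ℝ) (β : ℝ) (J : ℕ) (U : Finset ℕ) : Finset ℕ :=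
  (dyadicHit I (childScale β J)).filter fun k' =>
    ∃ k ∈ U, dyadic (childScale β J) k' ⊆ dyadic J k

/-- The nested collections `T_ℓ(J,b,ε)`: `Tset I H b ε 0 J` is `T_1(J,b,ε) = ND(J,b,ε)` and
`Tset I H b ε n J` is `T_{n+1}(J,b,ε)`, defined recursively by keeping the intervals having
at least `2^{J(bH-5ε)}` children in `T_n((1+b)J,b,ε)`. -/
def Tset (I : Set ℝ) (H b ε : ℝ) : ℕ → ℕ → Finset ℕ
  | 0, J => ND I H b ε J
  | n + 1, J =>
      (Tset I H b ε n J).filter fun k =>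
        (2 : ℝ) ^ ((J : ℝ) * (b * H - 5 * ε)) ≤
          (((Tset I H b ε n (childScale b J)).filter fun k' =>
              dyadic (childScale b J) k' ⊆ dyadic J k).card : ℝ)

/-- `T_ℓ(J,b,ε)` for `ℓ ≥ 1`. -/
def T (I : Set ℝ) (H b ε : ℝ) (ℓ J : ℕ) : Finset ℕ := Tset I H b ε (ℓ - 1) J

/-- `U_ℓ(J,b,ε) = T_{ℓ-1}(J,b,ε) \ T_ℓ(J,b,ε)` for `ℓ ≥ 2`. -/
def U (I : Set ℝ) (H b ε : ℝ) (ℓ J : ℕ) : Finset ℕ :=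
  T I H b ε (ℓ - 1) J \ T I H b ε ℓ J

/-- `T_∞(J,b,ε) = ∩_{ℓ ≥ 1} T_ℓ(J,b,ε)`. -/
def Tinf (I : Set ℝ) (H b ε : ℝ) (J : ℕ) : Finset ℕ :=
  (Tset I H b ε 0 J).filter fun k => ∀ n, k ∈ Tset I H b ε n J

/-- `U_∞(J,b,ε) = ∪_{ℓ ≥ 2} U_ℓ(J,b,ε)`. -/
def Uinf (I : Set ℝ) (H b ε : ℝ) (J : ℕ) : Finset ℕ :=
  (dyadicHit I J).filter fun k => ∃ ℓ, 2 ≤ ℓ ∧ k ∈ U I H b ε ℓ J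

/-- The union `Ũ` of the dyadic intervals (at scale `j`) of a collection `U`. -/
def tilde (j : ℕ) (U : Finset ℕ) : Set ℝ := ⋃ k ∈ U, dyadic j k

/-- The integer scale `⌊(1+b)^ℓ J⌋`. -/
def rscale (b : ℝ) (J ℓ : ℕ) : ℕ := ⌊(1 + b) ^ ℓ * (J : ℝ)⌋₊

/-! A point `x ∈ I` lying in some interval at scale `j` outside `T_∞` is exceptional at some scale
`j' ≥ j`: following the descendants containing `x`, either one of them fails to be in `ND`, so `x`
lies in an interval of `FD` or in a child of one of `SD`, or one of them is pruned for having fewer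
than `2^{j'(bH-5ε)}` surviving children while `x` lies in such a child. At most `2^{j(H-2ε)}`,
`2^{j(1+b)(H-3ε)}` and `2^{j(H+ε)} · 2^{j(bH-5ε)}` intervals are responsible for the three cases, at
scales `j`, `(1+b)j` and `(1+b)j`. By the Hausdorff-Cantelli lemma the points exceptional at
infinitely many scales form a set of dimension at most the maximum of `H - 2ε`, `H - 3ε` and
`H - 4ε/(1+b)`, which is less than `H`. All other points of `I` lie in `T̃_∞((1+b)^ℓ J)` for all
large `ℓ`, and countable stability of the dimension yields a single `ℓ₀`. -/

theorem hausdorffMeasure_limsup_cofinite_eq_zero {ι X : Type*} [Countable ι] [EMetricSpace X]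
    [MeasurableSpace X] [BorelSpace X] {s : ℝ} (hs : 0 < s) {t : ι → Set X}
    (ht : ∑' i, Metric.ediam (t i) ^ s ≠ ∞) : μH[s] (limsup t cofinite) = 0 := by
  have tail := ENNReal.tendsto_tsum_compl_atTop_zero ht
  have tail_root : Tendsto (fun F : Finset ι =>
      (∑' i : {i // i ∉ F}, Metric.ediam (t i) ^ s) ^ s⁻¹) atTop (nhds 0) := by
    simpa only [ENNReal.zero_rpow_of_pos (inv_pos.2 hs)] using tail.ennrpow_const s⁻¹
  have diam_le (F : Finset ι) (i : {i // i ∉ F}) :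
      Metric.ediam (t i) ≤ (∑' i : {i // i ∉ F}, Metric.ediam (t i) ^ s) ^ s⁻¹ :=
    (ENNReal.le_rpow_inv_iff hs).2
      (ENNReal.le_tsum (f := fun i : {i // i ∉ F} => Metric.ediam (t i) ^ s) i)
  have cover (F : Finset ι) : limsup t cofinite ⊆ ⋃ i : {i // i ∉ F}, t i := by
    intro x hx
    have hinf := frequently_cofinite_iff_infinite.1 (mem_limsup_iff_frequently_mem.1 hx)
    obtain ⟨i, hxi, hiF⟩ := hinf.exists_notMem_finset F
    exact mem_iUnion.2 ⟨⟨i, hiF⟩, hxi⟩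
  refine le_antisymm ?_ zero_le
  calc μH[s] (limsup t cofinite)
      ≤ liminf (fun F : Finset ι => ∑' i : {i // i ∉ F}, Metric.ediam (t i) ^ s) atTop :=
        Measure.hausdorffMeasure_le_liminf_tsum s _ _ tail_root
          (fun F (i : {i // i ∉ F}) => t i) (Eventually.of_forall diam_le)
          (Eventually.of_forall cover)
    _ = 0 := tail.liminf_eq

theorem limsup_union {ι X : Type*} (f : Filter ι) (s t : ι → Set X) :
    limsup (fun i => s i ∪ t i) f = limsup s f ∪ limsup t f := by
  ext x
  simp only [mem_union, mem_limsup_iff_frequently_mem, frequently_or_distrib]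

section Dyadic

variable {I : Set ℝ} {j j' k : ℕ} {x : ℝ}

theorem mem_tilde {U : Finset ℕ} : x ∈ tilde j U ↔ ∃ k ∈ U, x ∈ dyadic j k := by
  simp only [tilde, mem_iUnion, exists_prop]

theorem mem_dyadicHit : k ∈ dyadicHit I j ↔ k < 2 ^ j ∧ (dyadic j k ∩ I).Nonempty := by
  simp only [dyadicHit, Finset.mem_filter, Finset.mem_range]

theorem ediam_dyadic (j k : ℕ) :
    Metric.ediam (dyadic j k) = ENNReal.ofReal ((2 : ℝ) ^ (-(j : ℝ))) := by
  rw [dyadic, Real.ediam_Icc, Real.rpow_neg zero_le_two, Real.rpow_natCast]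
  congr 1
  ring

theorem dyadic_eq_union (j k : ℕ) :
    dyadic j k = dyadic (j + 1) (2 * k) ∪ dyadic (j + 1) (2 * k + 1) := by
  have left : (k : ℝ) / 2 ^ j = 2 * k / 2 ^ (j + 1) := by field_simp; ring
  have right : ((k : ℝ) + 1) / 2 ^ j = (2 * k + 1 + 1) / 2 ^ (j + 1) := by field_simp; ring
  simp only [dyadic, Nat.cast_add, Nat.cast_mul, Nat.cast_ofNat, Nat.cast_one, left, right]
  rw [Icc_union_Icc_eq_Icc] <;> gcongr <;> linarith

theorem exists_dyadic_subset_of_mem (hj : j ≤ j') (hk : k < 2 ^ j) (hx : x ∈ dyadic j k) :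
    ∃ k' < 2 ^ j', dyadic j' k' ⊆ dyadic j k ∧ x ∈ dyadic j' k' := by
  induction j', hj using Nat.le_induction with
  | base => exact ⟨k, hk, subset_rfl, hx⟩
  | succ m _ ih =>
    obtain ⟨i, hi, hsub, hxi⟩ := ih
    rw [dyadic_eq_union, union_subset_iff] at hsub
    rw [dyadic_eq_union] at hxi
    rcases hxi with hxi | hxi
    · exact ⟨2 * i, by omega, hsub.1, hxi⟩
    · exact ⟨2 * i + 1, by omega, hsub.2, hxi⟩

theorem exists_mem_childrenIn (hj : j ≤ j') (hk : k ∈ dyadicHit I j) (hxI : x ∈ I)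
    (hx : x ∈ dyadic j k) : ∃ k' ∈ childrenIn I j j' k, x ∈ dyadic j' k' := by
  obtain ⟨k', hk', hsub, hxk'⟩ := exists_dyadic_subset_of_mem hj (mem_dyadicHit.1 hk).1 hx
  exact ⟨k', Finset.mem_filter.2 ⟨mem_dyadicHit.2 ⟨hk', x, hxk', hxI⟩, hsub⟩, hxk'⟩

theorem dyadic_zero_zero : dyadic 0 0 = Icc 0 1 := by
  simp only [dyadic, Nat.cast_zero, pow_zero, div_one, zero_add]

theorem zero_mem_dyadicHit_zero (hI : I ⊆ Icc 0 1) (hne : I.Nonempty) : 0 ∈ dyadicHit I 0 := by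
  rw [mem_dyadicHit, dyadic_zero_zero, inter_eq_right.2 hI]
  exact ⟨one_pos, hne⟩

theorem subset_tilde_dyadicHit (hI : I ⊆ Icc 0 1) (j : ℕ) : I ⊆ tilde j (dyadicHit I j) := by
  intro x hx
  obtain ⟨k, hk, hxk⟩ := exists_mem_childrenIn j.zero_le (zero_mem_dyadicHit_zero hI ⟨x, hx⟩) hx
    (dyadic_zero_zero ▸ hI hx)
  exact mem_tilde.2 ⟨k, (Finset.mem_filter.1 hk).1, hxk⟩

end Dyadic

section LimsupDimension

variable {A : ℕ → Finset ℕ} {σ : ℕ → ℕ}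

theorem limsup_tilde_subset_limsup_dyadic (A : ℕ → Finset ℕ) (σ : ℕ → ℕ) :
    limsup (fun j => tilde (σ j) (A j)) atTop ⊆
      limsup (fun i : Σ j, A j => dyadic (σ i.1) i.2) cofinite := by
  intro x hx
  rw [mem_limsup_iff_frequently_mem, Nat.frequently_atTop_iff_infinite] at hx
  rw [mem_limsup_iff_frequently_mem, frequently_cofinite_iff_infinite]
  refine Set.Infinite.of_image Sigma.fst (hx.mono fun j hj => ?_)
  obtain ⟨k, hk, hxk⟩ := mem_tilde.1 hj
  exact ⟨⟨j, k, hk⟩, hxk, rfl⟩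

theorem tsum_ediam_dyadic_rpow (A : ℕ → Finset ℕ) (σ : ℕ → ℕ) (s : ℝ) :
    ∑' i : Σ j, A j, Metric.ediam (dyadic (σ i.1) i.2) ^ s =
      ∑' j, ENNReal.ofReal ((A j).card * (2 : ℝ) ^ (-(σ j : ℝ) * s)) := by
  rw [ENNReal.tsum_sigma']
  refine tsum_congr fun j => ?_
  simp only [ediam_dyadic, tsum_fintype, Finset.sum_const, Finset.card_univ, Fintype.card_coe,
    nsmul_eq_mul]
  rw [ENNReal.ofReal_rpow_of_pos (by positivity), ← Real.rpow_mul zero_le_two,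
    ENNReal.ofReal_mul (Nat.cast_nonneg _), ENNReal.ofReal_natCast]

theorem dimH_limsup_tilde_le {s : ℝ} (hs : 0 < s)
    (hsum : Summable fun j => (A j).card * (2 : ℝ) ^ (-(σ j : ℝ) * s)) :
    dimH (limsup (fun j => tilde (σ j) (A j)) atTop) ≤ ENNReal.ofReal s := by
  have hnull : μH[s] (limsup (fun j => tilde (σ j) (A j)) atTop) = 0 :=
    measure_mono_null (limsup_tilde_subset_limsup_dyadic A σ) <|
      hausdorffMeasure_limsup_cofinite_eq_zero hs <| by
        rw [tsum_ediam_dyadic_rpow]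
        exact hsum.tsum_ofReal_ne_top
  refine dimH_le_of_hausdorffMeasure_ne_top ?_
  rw [Real.coe_toNNReal s hs.le, hnull]
  exact ENNReal.zero_ne_top

theorem summable_card_mul_two_rpow {a c s : ℝ} (hs : 0 ≤ s) (hacs : a < c * s)
    (hσ : ∀ j : ℕ, c * j ≤ σ j + 1)
    (hA : ∀ᶠ j : ℕ in atTop, ((A j).card : ℝ) ≤ (2 : ℝ) ^ ((j : ℝ) * a)) :
    Summable fun j => (A j).card * (2 : ℝ) ^ (-(σ j : ℝ) * s) := by
  have ratio_lt_one : (2 : ℝ) ^ (a - c * s) < 1 :=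
    Real.rpow_lt_one_of_one_lt_of_neg one_lt_two (sub_neg.2 hacs)
  refine Summable.of_norm_bounded_eventually_nat
    ((summable_geometric_of_lt_one (by positivity) ratio_lt_one).mul_left ((2 : ℝ) ^ s)) ?_
  filter_upwards [hA] with j hj
  rw [Real.norm_of_nonneg (by positivity)]
  calc ((A j).card : ℝ) * 2 ^ (-(σ j : ℝ) * s)
      ≤ 2 ^ ((j : ℝ) * a) * 2 ^ (s - c * j * s) := by
        gcongr
        · exact one_le_two
        · linarith [mul_le_mul_of_nonneg_right (hσ j) hs]
    _ = 2 ^ s * (2 ^ (a - c * s)) ^ j := by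
        rw [← Real.rpow_mul_natCast zero_le_two, ← Real.rpow_add two_pos, ← Real.rpow_add two_pos]
        ring_nf

theorem dimH_limsup_tilde_le_div {a c : ℝ} (hc : 0 < c) (hσ : ∀ j : ℕ, c * j ≤ σ j + 1)
    (hA : ∀ᶠ j : ℕ in atTop, ((A j).card : ℝ) ≤ (2 : ℝ) ^ ((j : ℝ) * a)) :
    dimH (limsup (fun j => tilde (σ j) (A j)) atTop) ≤ ENNReal.ofReal (a / c) := by
  refine ENNReal.le_of_forall_pos_le_add fun δ hδ _ => ?_
  set s : ℝ := max (a / c) 0 + δ with hs_def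
  have hs : 0 < s := add_pos_of_nonneg_of_pos (le_max_right _ _) hδ
  have hacs : a < c * s := (div_lt_iff₀' hc).1 (lt_add_of_le_of_pos (le_max_left _ _) hδ)
  calc dimH (limsup (fun j => tilde (σ j) (A j)) atTop)
      ≤ ENNReal.ofReal s := dimH_limsup_tilde_le hs (summable_card_mul_two_rpow hs.le hacs hσ hA)
    _ = ENNReal.ofReal (a / c) + δ := by
        rw [hs_def, ENNReal.ofReal_add (le_max_right _ _) δ.coe_nonneg, ENNReal.ofReal_max,
          ENNReal.ofReal_zero, max_zero, ENNReal.ofReal_coe_nnreal]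

end LimsupDimension

section Scales

variable {b : ℝ}

theorem le_childScale (hb : 0 ≤ b) (j : ℕ) : j ≤ childScale b j :=
  Nat.le_floor (le_mul_of_one_le_left j.cast_nonneg (by linarith))

theorem mul_le_childScale_add_one (b : ℝ) (j : ℕ) : (1 + b) * j ≤ childScale b j + 1 :=
  (Nat.lt_floor_add_one _).le

theorem tendsto_rscale (hb : 0 < b) {J : ℕ} (hJ : 0 < J) : Tendsto (rscale b J) atTop atTop :=
  tendsto_nat_floor_atTop.comp <|
    (tendsto_pow_atTop_atTop_of_one_lt (by linarith)).atTop_mul_const (Nat.cast_pos.2 hJ)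

theorem childScale_zero (b : ℝ) : childScale b 0 = 0 := by
  simp only [childScale, Nat.cast_zero, mul_zero, Nat.floor_zero]

theorem rscale_zero (b : ℝ) (ℓ : ℕ) : rscale b 0 ℓ = 0 := by
  simp only [rscale, Nat.cast_zero, mul_zero, Nat.floor_zero]

end Scales

section Pruning

variable {I : Set ℝ} {H b ε : ℝ} {n j k : ℕ} {x : ℝ}

/-- The children of the interval `k` of scale `j` that belong to `T_{n+1}((1+b)j,b,ε)`; their number
decides whether `k` passes from `T_{n+1}(j,b,ε)` to `T_{n+2}(j,b,ε)`. -/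
def survivingChildren (I : Set ℝ) (H b ε : ℝ) (n j k : ℕ) : Finset ℕ :=
  (Tset I H b ε n (childScale b j)).filter fun k' => dyadic (childScale b j) k' ⊆ dyadic j k

/-- The children of the interval `k` of scale `j` that survive up to some stage at which `k` has
fewer than `2^{j(bH-5ε)}` surviving children. Since the surviving children decrease with the stage,
these are the survivors at the first such stage. -/
def sparseChildren (I : Set ℝ) (H b ε : ℝ) (j k : ℕ) : Finset ℕ :=
  (dyadicHit I (childScale b j)).filter fun k' => ∃ n,
    ((survivingChildren I H b ε n j k).card : ℝ) < (2 : ℝ) ^ ((j : ℝ) * (b * H - 5 * ε)) ∧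
      k' ∈ survivingChildren I H b ε n j k

/-- The sparse children of all intervals of `ND(j,b,ε)`; they contain the children of the paper's
`U_ℓ(j,b,ε) = T_{ℓ-1}(j,b,ε) \ T_ℓ(j,b,ε)` lying in `T_{ℓ-1}((1+b)j,b,ε)`, for all `ℓ ≥ 2`. -/
def sparseOffspring (I : Set ℝ) (H b ε : ℝ) (j : ℕ) : Finset ℕ :=
  (ND I H b ε j).biUnion (sparseChildren I H b ε j)

/-- The points at which scale `j` can cause an interval to be excluded from `T_∞`: they lie in an
interval of `FD`, in a child of an interval of `SD`, or in a sparse child of an interval of `ND`. -/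
def exceptionalSet (I : Set ℝ) (H b ε : ℝ) (j : ℕ) : Set ℝ :=
  tilde j (FD I H b ε j) ∪ (tilde (childScale b j) (CB I b j (SD I H b ε j)) ∪
    tilde (childScale b j) (sparseOffspring I H b ε j))

theorem mem_Tset_succ : k ∈ Tset I H b ε (n + 1) j ↔ k ∈ Tset I H b ε n j ∧
    (2 : ℝ) ^ ((j : ℝ) * (b * H - 5 * ε)) ≤ (survivingChildren I H b ε n j k).card :=
  Finset.mem_filter

theorem Tset_antitone (I : Set ℝ) (H b ε : ℝ) (j : ℕ) : Antitone fun n => Tset I H b ε n j :=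
  antitone_nat_of_succ_le fun _ _ hk => (mem_Tset_succ.1 hk).1

theorem survivingChildren_antitone (I : Set ℝ) (H b ε : ℝ) (j k : ℕ) :
    Antitone fun n => survivingChildren I H b ε n j k :=
  fun _ _ hmn => Finset.filter_subset_filter _ (Tset_antitone I H b ε _ hmn)

theorem mem_Tinf : k ∈ Tinf I H b ε j ↔ ∀ n, k ∈ Tset I H b ε n j :=
  Finset.mem_filter.trans <| and_iff_right_of_imp fun h => h 0

theorem card_sparseChildren_le (I : Set ℝ) (H b ε : ℝ) (j k : ℕ) :
    ((sparseChildren I H b ε j k).card : ℝ) ≤ (2 : ℝ) ^ ((j : ℝ) * (b * H - 5 * ε)) := by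
  by_cases hsparse : ∃ n, ((survivingChildren I H b ε n j k).card : ℝ) <
      (2 : ℝ) ^ ((j : ℝ) * (b * H - 5 * ε))
  · have hsub : sparseChildren I H b ε j k ⊆
        survivingChildren I H b ε (Nat.find hsparse) j k := by
      intro k' hk'
      obtain ⟨-, n, hn, hk'n⟩ := Finset.mem_filter.1 hk'
      exact survivingChildren_antitone I H b ε j k (Nat.find_min' hsparse hn) hk'n
    exact (Nat.cast_le.2 (Finset.card_le_card hsub)).trans (Nat.find_spec hsparse).le
  · have hempty : sparseChildren I H b ε j k = ∅ :=
      Finset.filter_eq_empty_iff.2 fun _ _ ⟨n, hn, _⟩ => hsparse ⟨n, hn⟩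
    rw [hempty, Finset.card_empty, Nat.cast_zero]
    positivity

theorem card_sparseOffspring_le (I : Set ℝ) (H b ε : ℝ) (j : ℕ) :
    ((sparseOffspring I H b ε j).card : ℝ) ≤
      (ND I H b ε j).card * (2 : ℝ) ^ ((j : ℝ) * (b * H - 5 * ε)) := by
  calc ((sparseOffspring I H b ε j).card : ℝ)
      ≤ ∑ k ∈ ND I H b ε j, ((sparseChildren I H b ε j k).card : ℝ) := by
        exact_mod_cast Finset.card_biUnion_le
    _ ≤ _ := by
        rw [← nsmul_eq_mul]
        exact Finset.sum_le_card_nsmul _ _ _ fun k _ => card_sparseChildren_le I H b ε j k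

theorem mem_SD_or_mem_FD_of_notMem_ND (hk : k ∈ dyadicHit I j) (hND : k ∉ ND I H b ε j) :
    k ∈ SD I H b ε j ∨ k ∈ FD I H b ε j := by
  simp only [ND, SD, FD, Finset.mem_filter, hk, true_and, not_and_or, not_le] at hND ⊢
  exact hND.imp le_of_lt le_of_lt

theorem mem_exceptionalSet_of_notMem_ND (hb : 0 ≤ b) (hxI : x ∈ I) (hk : k ∈ dyadicHit I j)
    (hx : x ∈ dyadic j k) (hND : k ∉ ND I H b ε j) : x ∈ exceptionalSet I H b ε j := by
  rcases mem_SD_or_mem_FD_of_notMem_ND hk hND with hSD | hFD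
  · obtain ⟨k', hk', hxk'⟩ := exists_mem_childrenIn (le_childScale hb j) hk hxI hx
    obtain ⟨hit, hsub⟩ := Finset.mem_filter.1 hk'
    exact Or.inr <| Or.inl <| mem_tilde.2 ⟨k', Finset.mem_filter.2 ⟨hit, k, hSD, hsub⟩, hxk'⟩
  · exact Or.inl <| mem_tilde.2 ⟨k, hFD, hx⟩

theorem exists_mem_exceptionalSet (hb : 0 ≤ b) (hxI : x ∈ I) (hk : k ∈ dyadicHit I j)
    (hx : x ∈ dyadic j k) (hT : k ∉ Tset I H b ε n j) :
    ∃ j' ≥ j, x ∈ exceptionalSet I H b ε j' := by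
  induction n generalizing j k with
  | zero => exact ⟨j, le_rfl, mem_exceptionalSet_of_notMem_ND hb hxI hk hx hT⟩
  | succ n ih =>
    by_cases hTn : k ∈ Tset I H b ε n j
    · have hsparse : ((survivingChildren I H b ε n j k).card : ℝ) <
          (2 : ℝ) ^ ((j : ℝ) * (b * H - 5 * ε)) :=
        not_le.1 fun h => hT (mem_Tset_succ.2 ⟨hTn, h⟩)
      obtain ⟨k', hk', hxk'⟩ := exists_mem_childrenIn (le_childScale hb j) hk hxI hx
      obtain ⟨hit, hsub⟩ := Finset.mem_filter.1 hk'
      by_cases hk'T : k' ∈ Tset I H b ε n (childScale b j)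
      · have hND : k ∈ ND I H b ε j := Tset_antitone I H b ε j n.zero_le hTn
        have hk'sparse : k' ∈ sparseChildren I H b ε j k :=
          Finset.mem_filter.2 ⟨hit, n, hsparse, Finset.mem_filter.2 ⟨hk'T, hsub⟩⟩
        exact ⟨j, le_rfl, Or.inr <| Or.inr <|
          mem_tilde.2 ⟨k', Finset.mem_biUnion.2 ⟨k, hND, hk'sparse⟩, hxk'⟩⟩
      · obtain ⟨j', hj', hxj'⟩ := ih hit hxk' hk'T
        exact ⟨j', (le_childScale hb j).trans hj', hxj'⟩
    · exact ih hk hx hTn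

theorem exists_mem_exceptionalSet_of_notMem_tilde_Tinf (hI : I ⊆ Icc 0 1) (hb : 0 ≤ b)
    (hxI : x ∈ I) (hx : x ∉ tilde j (Tinf I H b ε j)) :
    ∃ j' ≥ j, x ∈ exceptionalSet I H b ε j' := by
  obtain ⟨k, hk, hxk⟩ := mem_tilde.1 (subset_tilde_dyadicHit hI j hxI)
  have hkT : k ∉ Tinf I H b ε j := fun h => hx (mem_tilde.2 ⟨k, h, hxk⟩)
  obtain ⟨n, hn⟩ := not_forall.1 (mem_Tinf.not.1 hkT)
  exact exists_mem_exceptionalSet hb hxI hk hxk hn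

theorem zero_mem_Tinf_zero (hI : I ⊆ Icc 0 1) (hne : I.Nonempty) : 0 ∈ Tinf I H b ε 0 := by
  have hhit := zero_mem_dyadicHit_zero hI hne
  have hchildren : childrenIn I 0 0 0 = {0} := by
    refine Finset.eq_singleton_iff_unique_mem.2
      ⟨Finset.mem_filter.2 ⟨hhit, subset_rfl⟩, fun k hk => ?_⟩
    simpa only [pow_zero, Nat.lt_one_iff] using (mem_dyadicHit.1 (Finset.mem_filter.1 hk).1).1
  refine mem_Tinf.2 fun n => ?_
  induction n with
  | zero =>
    refine Finset.mem_filter.2 ⟨hhit, ?_⟩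
    simp only [childScale_zero, hchildren, Finset.card_singleton, Nat.cast_zero, Nat.cast_one,
      zero_mul, Real.rpow_zero, le_refl, and_self]
  | succ n ih =>
    have hself : 0 ∈ survivingChildren I H b ε n 0 0 := by
      rw [survivingChildren, childScale_zero]
      exact Finset.mem_filter.2 ⟨ih, subset_rfl⟩
    rw [mem_Tset_succ, Nat.cast_zero, zero_mul, Real.rpow_zero, Nat.one_le_cast]
    exact ⟨ih, Finset.card_pos.2 ⟨0, hself⟩⟩

theorem subset_liminf_tilde_Tinf_union_limsup_exceptionalSet (hI : I ⊆ Icc 0 1) (hb : 0 < b)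
    (J : ℕ) :
    I ⊆ liminf (fun ℓ => tilde (rscale b J ℓ) (Tinf I H b ε (rscale b J ℓ))) atTop ∪
      limsup (exceptionalSet I H b ε) atTop := by
  intro x hxI
  rw [mem_union, mem_liminf_iff_eventually_mem, mem_limsup_iff_frequently_mem]
  rcases J.eq_zero_or_pos with rfl | hJ
  · refine Or.inl (Eventually.of_forall fun ℓ => ?_)
    rw [rscale_zero]
    exact mem_tilde.2 ⟨0, zero_mem_Tinf_zero hI ⟨x, hxI⟩, dyadic_zero_zero ▸ hI hxI⟩
  · refine or_iff_not_imp_left.2 fun hnot => frequently_atTop.2 fun M => ?_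
    obtain ⟨ℓ, hℓ, hMℓ⟩ := ((not_eventually.1 hnot).and_eventually
      ((tendsto_rscale hb hJ).eventually_ge_atTop M)).exists
    obtain ⟨j, hj, hxj⟩ := exists_mem_exceptionalSet_of_notMem_tilde_Tinf hI hb.le hxI hℓ
    exact ⟨j, hMℓ.trans hj, hxj⟩

theorem dimH_limsup_exceptionalSet_lt (hH : 0 < H) (hb : 0 < b) (hε : 0 < ε)
    (hND : ∀ᶠ j : ℕ in atTop, ((ND I H b ε j).card : ℝ) ≤ (2 : ℝ) ^ ((j : ℝ) * (H + ε)))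
    (hFD : ∀ᶠ j : ℕ in atTop, ((FD I H b ε j).card : ℝ) ≤ (2 : ℝ) ^ ((j : ℝ) * (H - 2 * ε)))
    (hSD : ∀ᶠ j : ℕ in atTop, ((CB I b j (SD I H b ε j)).card : ℝ) ≤
      (2 : ℝ) ^ ((j : ℝ) * (1 + b) * (H - 3 * ε))) :
    dimH (limsup (exceptionalSet I H b ε) atTop) < ENNReal.ofReal H := by
  have h1b : 0 < 1 + b := by linarith
  have hsparse : ∀ᶠ j : ℕ in atTop, ((sparseOffspring I H b ε j).card : ℝ) ≤
      (2 : ℝ) ^ ((j : ℝ) * ((H + ε) + (b * H - 5 * ε))) := by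
    filter_upwards [hND] with j hj
    rw [mul_add, Real.rpow_add two_pos]
    exact (card_sparseOffspring_le I H b ε j).trans (by gcongr)
  have dim_FD := dimH_limsup_tilde_le_div (σ := id) one_pos
    (fun j => by rw [one_mul, id]; linarith) hFD
  have dim_SD := dimH_limsup_tilde_le_div h1b (mul_le_childScale_add_one b)
    (by simpa only [mul_assoc] using hSD)
  have dim_sparse := dimH_limsup_tilde_le_div h1b (mul_le_childScale_add_one b) hsparse
  have lt_of_le_ofReal {d : ℝ≥0∞} {s : ℝ} (hd : d ≤ ENNReal.ofReal s) (hs : s < H) :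
      d < ENNReal.ofReal H := hd.trans_lt ((ENNReal.ofReal_lt_ofReal_iff hH).2 hs)
  unfold exceptionalSet
  rw [limsup_union, limsup_union, dimH_union, dimH_union]
  refine max_lt (lt_of_le_ofReal dim_FD ?_)
    (max_lt (lt_of_le_ofReal dim_SD ?_) (lt_of_le_ofReal dim_sparse ?_))
  · linarith
  · rw [div_lt_iff₀' h1b]
    gcongr
    linarith
  · rw [div_lt_iff₀' h1b]
    linarith

end Pruning

theorem dimH_inter_Tinf_ge_general {I : Set ℝ} {H b ε : ℝ} (hI : I ⊆ Icc 0 1) (hH : 0 < H)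
    (hdim : ENNReal.ofReal H ≤ dimH I) (hb : 0 < b) (hε : 0 < ε)
    (hND : ∀ᶠ j : ℕ in atTop, ((ND I H b ε j).card : ℝ) ≤ (2 : ℝ) ^ ((j : ℝ) * (H + ε)))
    (hFD : ∀ᶠ j : ℕ in atTop, ((FD I H b ε j).card : ℝ) ≤ (2 : ℝ) ^ ((j : ℝ) * (H - 2 * ε)))
    (hSD : ∀ᶠ j : ℕ in atTop, ((CB I b j (SD I H b ε j)).card : ℝ) ≤
      (2 : ℝ) ^ ((j : ℝ) * (1 + b) * (H - 3 * ε)))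
    (J : ℕ) {s : ℝ≥0∞} (hs : s < dimH I) :
    ∃ ℓ₀ : ℕ, s < dimH ((⋂ ℓ : ℕ, ⋂ (_ : ℓ₀ ≤ ℓ),
      tilde (rscale b J ℓ) (Tinf I H b ε (rscale b J ℓ))) ∩ I) := by
  set G := liminf (fun ℓ => tilde (rscale b J ℓ) (Tinf I H b ε (rscale b J ℓ))) atTop with hG
  have hcover : I ⊆ (G ∩ I) ∪ limsup (exceptionalSet I H b ε) atTop := fun x hx =>
    (subset_liminf_tilde_Tinf_union_limsup_exceptionalSet hI hb J hx).imp_left fun h => ⟨h, hx⟩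
  have hbad : dimH (limsup (exceptionalSet I H b ε) atTop) < dimH I :=
    (dimH_limsup_exceptionalSet_lt hH hb hε hND hFD hSD).trans_le hdim
  have hgood : dimH I ≤ dimH (G ∩ I) :=
    (le_max_iff.1 ((dimH_mono hcover).trans_eq (dimH_union _ _))).resolve_right hbad.not_ge
  have hunion : dimH (G ∩ I) = ⨆ ℓ₀ : ℕ, dimH ((⋂ ℓ : ℕ, ⋂ (_ : ℓ₀ ≤ ℓ),
      tilde (rscale b J ℓ) (Tinf I H b ε (rscale b J ℓ))) ∩ I) := by
    rw [hG, liminf_eq_iSup_iInf_of_nat, iSup_eq_iUnion, iUnion_inter, dimH_iUnion]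
    simp only [iInf_eq_iInter, ge_iff_le]
  exact lt_iSup_iff.1 (hunion ▸ hs.trans_le hgood)

/-- there is `ℓ₀` such that the intersection of the unions of the intervals
of `T_∞((1+b)^ℓ J,b,ε)`, `ℓ ≥ ℓ₀`, intersected with `I`, has Hausdorff dimension `≥ H - ε`. -/
theorem dimH_inter_Tinf_ge
    (I : Set ℝ) (H : ℝ) (hIc : IsCompact I) (hIsub : I ⊆ Set.Icc 0 1) (hIne : I.Nonempty)
    (hHpos : 0 < H) (hdim : dimH I = ENNReal.ofReal H) (hbox : upperBoxDim I = H)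
    (b ε : ℝ) (hb : b ∈ Set.Ioo (0 : ℝ) 1) (hε : 0 < ε) (hbH : 0 < b * H - 5 * ε)
    (J₀ : ℕ)
    (hJ₀ : ∀ j ≥ J₀,
      ((2 : ℝ) ^ ((j : ℝ) * (H - 2 * ε)) ≤ ((ND I H b ε j).card : ℝ) ∧
        ((ND I H b ε j).card : ℝ) ≤ (2 : ℝ) ^ ((j : ℝ) * (H + ε))) ∧
      ((FD I H b ε j).card : ℝ) ≤ (2 : ℝ) ^ ((j : ℝ) * (H - 2 * ε)) ∧
      ((CB I b j (SD I H b ε j)).card : ℝ) ≤ (2 : ℝ) ^ ((j : ℝ) * (1 + b) * (H - 3 * ε)))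
    (J : ℕ) (hJ : J₀ ≤ J) :
    ∃ ℓ₀ : ℕ,
      ENNReal.ofReal (H - ε) ≤
        dimH ((⋂ ℓ : ℕ, ⋂ (_ : ℓ₀ ≤ ℓ),
          tilde (rscale b J ℓ) (Tinf I H b ε (rscale b J ℓ))) ∩ I) := by
  have hcard := eventually_atTop.2 ⟨J₀, hJ₀⟩
  have hlt : ENNReal.ofReal (H - ε) < dimH I :=
    hdim ▸ (ENNReal.ofReal_lt_ofReal_iff hHpos).2 (sub_lt_self H hε)
  obtain ⟨ℓ₀, hℓ₀⟩ := dimH_inter_Tinf_ge_general hIsub hHpos hdim.ge hb.1 hε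
    (hcard.mono fun _ h => h.1.2) (hcard.mono fun _ h => h.2.1) (hcard.mono fun _ h => h.2.2) J hlt
  exact ⟨ℓ₀, hℓ₀.le⟩
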